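/- Let C be a 2-reduced cocommutative dg coalgebra over ℚ and t : C ⇝ ΩC its universal twisting chain. For every left dg C-comodule N, the unit of the (t^! ⊣ t_*) adjunction, N → t_* t^! N = C ⊗^t (ΩC ⊗_t N), given by n ↦ n₍₀₎ ⊗ 1 ⊗ n₍₁₎, is a quasi-isomorphism of C-comodules, natural in N. -/

import Mathlib

open scoped TensorProduct

noncomputable section

/-- A homologically graded differential graded `ℚ`-vector space (chain complex of
`ℚ`-vector spaces presented as a graded module with a degree `-1` square-zero differential). -/
structure DGVect : Type 1 where
  carrier : Type
  [isAddCommGroup : AddCommGroup carrier]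
  [isModule : Module ℚ carrier]
  grading : ℤ → Submodule ℚ carrier
  [isDecomp : DirectSum.Decomposition grading]
  d : carrier →ₗ[ℚ] carrier
  d_mem : ∀ (n : ℤ), ∀ x ∈ grading n, d x ∈ grading (n - 1)
  d_sq : d.comp d = 0

attribute [instance] DGVect.isAddCommGroup DGVect.isModule DGVect.isDecomp

/-- The operator acting on the degree `n` graded component by `(-1)^(k*n)`. -/
def signOpOf {V : Type} [AddCommGroup V] [Module ℚ V] (g : ℤ → Submodule ℚ V)
    [DirectSum.Decomposition g] (k : ℤ) : V →ₗ[ℚ] V :=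
  (DirectSum.toModule ℚ ℤ V fun n => ((-1 : ℚ) ^ (k * n)) • (g n).subtype).comp
    (DirectSum.decomposeLinearEquiv g).toLinearMap

/-- The Koszul parity operator, acting by `(-1)^n` in degree `n`. -/
def parityOf {V : Type} [AddCommGroup V] [Module ℚ V] (g : ℤ → Submodule ℚ V)
    [DirectSum.Decomposition g] : V →ₗ[ℚ] V := signOpOf g 1

def DGVect.parity (V : DGVect) : V.carrier →ₗ[ℚ] V.carrier := parityOf V.grading

/-- A graded object is bounded below if it vanishes in all sufficiently negative degrees. -/
def DGVect.BoundedBelow (V : DGVect) : Prop := ∃ b : ℤ, ∀ n : ℤ, n < b → V.grading n = ⊥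

/-- The Koszul signed braiding `v ⊗ w ↦ (-1)^{|v||w|} w ⊗ v` of graded vector spaces. -/
def kSwapOf {V W : Type} [AddCommGroup V] [Module ℚ V] [AddCommGroup W] [Module ℚ W]
    (gV : ℤ → Submodule ℚ V) (gW : ℤ → Submodule ℚ W)
    [DirectSum.Decomposition gV] [DirectSum.Decomposition gW] :
    V ⊗[ℚ] W →ₗ[ℚ] W ⊗[ℚ] V :=
  TensorProduct.lift
    ((DirectSum.toModule ℚ ℤ (W →ₗ[ℚ] W ⊗[ℚ] V) (fun i =>
        (((DirectSum.toModule ℚ ℤ (V →ₗ[ℚ] W ⊗[ℚ] V) (fun j =>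
              ((-1 : ℚ) ^ (i * j)) • ((TensorProduct.mk ℚ W V).comp (gW j).subtype))).comp
            (DirectSum.decomposeLinearEquiv gW).toLinearMap).flip).comp
          (gV i).subtype)).comp
      (DirectSum.decomposeLinearEquiv gV).toLinearMap)

/-- The degree `n` part of the tensor product grading:
the span of the homogeneous tensors of total degree `n`. -/
def tensorGrading {V W : Type} [AddCommGroup V] [Module ℚ V] [AddCommGroup W] [Module ℚ W]
    (gV : ℤ → Submodule ℚ V) (gW : ℤ → Submodule ℚ W) (n : ℤ) : Submodule ℚ (V ⊗[ℚ] W) :=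
  ⨆ p : {p : ℤ × ℤ // p.1 + p.2 = n},
    LinearMap.range (TensorProduct.map (gV p.1.1).subtype (gW p.1.2).subtype)

/-- `f` is a quasi-isomorphism from the complex `(V, dV)` to the complex `(W, dW)`:
it induces a bijection on homology (`ker d / im d`). -/
def IsQuasiIso {V W : Type} [AddCommGroup V] [Module ℚ V] [AddCommGroup W] [Module ℚ W]
    (dV : V →ₗ[ℚ] V) (dW : W →ₗ[ℚ] W) (f : V →ₗ[ℚ] W) : Prop :=
  (∀ x : V, dV x = 0 → (∃ y, f x = dW y) → ∃ z, x = dV z) ∧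
  (∀ w : W, dW w = 0 → ∃ x, dV x = 0 ∧ ∃ y, w - f x = dW y)

/-- A differential graded algebra over `ℚ`. -/
structure DGAlgebra extends DGVect where
  mul : carrier →ₗ[ℚ] carrier →ₗ[ℚ] carrier
  one : carrier
  one_mem : one ∈ grading 0
  mul_mem : ∀ (i j : ℤ) (x y : carrier), x ∈ grading i → y ∈ grading j →
    mul x y ∈ grading (i + j)
  mul_assoc' : ∀ x y z : carrier, mul (mul x y) z = mul x (mul y z)
  one_mul' : ∀ x : carrier, mul one x = x
  mul_one' : ∀ x : carrier, mul x one = x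
  leibniz : ∀ (i : ℤ) (x y : carrier), x ∈ grading i →
    d (mul x y) = mul (d x) y + ((-1 : ℚ) ^ i) • mul x (d y)

/-- The multiplication of a dg algebra as a map out of the tensor product. -/
def DGAlgebra.mulMap (A : DGAlgebra) : A.carrier ⊗[ℚ] A.carrier →ₗ[ℚ] A.carrier :=
  TensorProduct.lift A.mul

/-- A dg algebra is connective if it is concentrated in non-negative degrees. -/
def DGAlgebra.Connective (A : DGAlgebra) : Prop := ∀ n : ℤ, n < 0 → A.grading n = ⊥

/-- A (coassociative counital) differential graded coalgebra over `ℚ`,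
non-negatively graded. -/
structure DGCoalgebra extends DGVect where
  comul : carrier →ₗ[ℚ] carrier ⊗[ℚ] carrier
  counit : carrier →ₗ[ℚ] ℚ
  nonneg : ∀ n : ℤ, n < 0 → grading n = ⊥
  comul_mem : ∀ (n : ℤ), ∀ x ∈ grading n, comul x ∈ tensorGrading grading grading n
  counit_zero : ∀ (n : ℤ), n ≠ 0 → ∀ x ∈ grading n, counit x = 0
  coassoc : (TensorProduct.assoc ℚ carrier carrier carrier).toLinearMap.comp
      ((TensorProduct.map comul LinearMap.id).comp comul)
      = (TensorProduct.map LinearMap.id comul).comp comul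
  counit_comul_left : (TensorProduct.lid ℚ carrier).toLinearMap.comp
      ((TensorProduct.map counit LinearMap.id).comp comul) = LinearMap.id
  counit_comul_right : (TensorProduct.rid ℚ carrier).toLinearMap.comp
      ((TensorProduct.map LinearMap.id counit).comp comul) = LinearMap.id
  comul_chain : comul.comp d
      = (TensorProduct.map d LinearMap.id + TensorProduct.map (parityOf grading) d).comp comul
  counit_chain : counit.comp d = 0

/-- Cocommutativity: the comultiplication is invariant under the Koszul signed twist. -/
def DGCoalgebra.Cocomm (C : DGCoalgebra) : Prop :=
  (kSwapOf C.grading C.grading).comp C.comul = C.comul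

/-- A coaugmented dg coalgebra: a dg coalgebra with a coaugmentation `η : ℚ → C`,
recorded by the grouplike element `one = η 1` in degree `0`. -/
structure CoaugDGCoalgebra extends DGCoalgebra where
  one : carrier
  one_mem : one ∈ grading 0
  counit_one : counit one = 1
  comul_one : comul one = one ⊗ₜ[ℚ] one

/-- A coaugmented dg coalgebra is 2-reduced if `C₀ = ℚ` (spanned by the coaugmentation)
and `C₁ = 0`. -/
def CoaugDGCoalgebra.TwoReduced (C : CoaugDGCoalgebra) : Prop :=
  C.grading 0 = Submodule.span ℚ {C.one} ∧ C.grading 1 = ⊥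

/-- A twisting chain `τ : C ⇝ A`: a degree `-1` linear map satisfying
`d(τc) = -τ(dc) - (-1)^{|c₍₀₎|} τ(c₍₀₎)·τ(c₍₁₎)`. -/
structure TwistingChain (C : DGCoalgebra) (A : DGAlgebra) where
  toFun : C.carrier →ₗ[ℚ] A.carrier
  mem : ∀ (n : ℤ), ∀ x ∈ C.grading n, toFun x ∈ A.grading (n - 1)
  twist : A.d.comp toFun + toFun.comp C.d
      + A.mulMap.comp ((TensorProduct.map (toFun.comp (parityOf C.grading)) toFun).comp C.comul)
      = 0

/-- A left dg module over a dg algebra. -/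
structure DGModule (A : DGAlgebra) extends DGVect where
  smul : A.carrier →ₗ[ℚ] carrier →ₗ[ℚ] carrier
  smul_mem : ∀ (i j : ℤ) (a : A.carrier) (x : carrier), a ∈ A.grading i → x ∈ grading j →
    smul a x ∈ grading (i + j)
  one_smul' : ∀ x : carrier, smul A.one x = x
  mul_smul' : ∀ (a b : A.carrier) (x : carrier), smul (A.mul a b) x = smul a (smul b x)
  leibniz : ∀ (i : ℤ) (a : A.carrier) (x : carrier), a ∈ A.grading i →
    d (smul a x) = smul (A.d a) x + ((-1 : ℚ) ^ i) • smul a (d x)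

/-- The action of a dg module as a map out of the tensor product. -/
def DGModule.actionMap {A : DGAlgebra} (M : DGModule A) :
    A.carrier ⊗[ℚ] M.carrier →ₗ[ℚ] M.carrier := TensorProduct.lift M.smul

/-- A left dg comodule over a dg coalgebra. -/
structure DGComodule (C : DGCoalgebra) extends DGVect where
  coact : carrier →ₗ[ℚ] C.carrier ⊗[ℚ] carrier
  coact_mem : ∀ (n : ℤ), ∀ x ∈ grading n, coact x ∈ tensorGrading C.grading grading n
  coassoc : (TensorProduct.assoc ℚ C.carrier C.carrier carrier).toLinearMap.comp
      ((TensorProduct.map C.comul LinearMap.id).comp coact)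
      = (TensorProduct.map LinearMap.id coact).comp coact
  counit_coact : (TensorProduct.lid ℚ carrier).toLinearMap.comp
      ((TensorProduct.map C.counit LinearMap.id).comp coact) = LinearMap.id
  coact_chain : coact.comp d
      = (TensorProduct.map C.d LinearMap.id + TensorProduct.map (parityOf C.grading) d).comp coact

/-- Morphisms of dg modules: degree `0` graded chain maps commuting with the action. -/
def IsModuleHom (A : DGAlgebra) (M M' : DGModule A)
    (g : M.carrier →ₗ[ℚ] M'.carrier) : Prop :=
  (∀ (n : ℤ), ∀ x ∈ M.grading n, g x ∈ M'.grading n) ∧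
  g.comp M.d = M'.d.comp g ∧
  g.comp M.actionMap = M'.actionMap.comp (TensorProduct.map LinearMap.id g)

/-- Morphisms of dg comodules: degree `0` graded chain maps commuting with the coaction. -/
def IsComoduleHom (C : DGCoalgebra) (N N' : DGComodule C)
    (f : N.carrier →ₗ[ℚ] N'.carrier) : Prop :=
  (∀ (n : ℤ), ∀ x ∈ N.grading n, f x ∈ N'.grading n) ∧
  f.comp N.d = N'.d.comp f ∧
  (TensorProduct.map LinearMap.id f).comp N.coact = N'.coact.comp f

/-- The `A`-action on a twisted extension `A ⊗_τ N`: multiplication on the first factor. -/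
def extAction (A : DGAlgebra) (N : Type) [AddCommGroup N] [Module ℚ N] :
    A.carrier ⊗[ℚ] (A.carrier ⊗[ℚ] N) →ₗ[ℚ] A.carrier ⊗[ℚ] N :=
  (TensorProduct.map A.mulMap LinearMap.id).comp
    (TensorProduct.assoc ℚ A.carrier A.carrier N).symm.toLinearMap

/-- The differential of the twisted extension `A ⊗_τ N`:
`d(a ⊗ n) = da ⊗ n + (-1)^{|a|} a ⊗ dn - (-1)^{|a|} a·τ(n₍₀₎) ⊗ n₍₁₎`
for a `C`-comodule `(N, dN, ρ)`. -/
def extDiff (C : DGCoalgebra) (A : DGAlgebra) (τ : TwistingChain C A)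
    (N : Type) [AddCommGroup N] [Module ℚ N]
    (dN : N →ₗ[ℚ] N) (ρ : N →ₗ[ℚ] C.carrier ⊗[ℚ] N) :
    A.carrier ⊗[ℚ] N →ₗ[ℚ] A.carrier ⊗[ℚ] N :=
  TensorProduct.map A.d LinearMap.id + TensorProduct.map (parityOf A.grading) dN
    - (TensorProduct.map
        (A.mulMap.comp (TensorProduct.map (parityOf A.grading) τ.toFun)) LinearMap.id).comp
        ((TensorProduct.assoc ℚ A.carrier C.carrier N).symm.toLinearMap.comp
          (TensorProduct.map LinearMap.id ρ))

/-- The `C`-coaction on a twisted coextension `C ⊗^τ M`, namely `Δ ⊗ id`. -/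
def coextCoact (C : DGCoalgebra) (M : Type) [AddCommGroup M] [Module ℚ M] :
    C.carrier ⊗[ℚ] M →ₗ[ℚ] C.carrier ⊗[ℚ] (C.carrier ⊗[ℚ] M) :=
  (TensorProduct.assoc ℚ C.carrier C.carrier M).toLinearMap.comp
    (TensorProduct.map C.comul LinearMap.id)

/-- The differential of the twisted coextension `C ⊗^τ M`, expressed in terms of the map
`tact : C ⊗ M → M`, `c ⊗ m ↦ τ(c)·m`:
`d(c ⊗ m) = dc ⊗ m + (-1)^{|c|} c ⊗ dm + (-1)^{|c₍₀₎|} c₍₀₎ ⊗ τ(c₍₁₎)·m`. -/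
def coextDiffFrom (C : DGCoalgebra) (M : Type) [AddCommGroup M] [Module ℚ M]
    (dM : M →ₗ[ℚ] M) (tact : C.carrier ⊗[ℚ] M →ₗ[ℚ] M) :
    C.carrier ⊗[ℚ] M →ₗ[ℚ] C.carrier ⊗[ℚ] M :=
  TensorProduct.map C.d LinearMap.id + TensorProduct.map (parityOf C.grading) dM
    + (TensorProduct.map (parityOf C.grading) tact).comp (coextCoact C M)

/-- The differential of the twisted coextension `C ⊗^τ M` of an `A`-module `(M, dM, act)`. -/
def coextDiff (C : DGCoalgebra) (A : DGAlgebra) (τ : TwistingChain C A)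
    (M : Type) [AddCommGroup M] [Module ℚ M]
    (dM : M →ₗ[ℚ] M) (act : A.carrier ⊗[ℚ] M →ₗ[ℚ] M) :
    C.carrier ⊗[ℚ] M →ₗ[ℚ] C.carrier ⊗[ℚ] M :=
  coextDiffFrom C M dM (act.comp (TensorProduct.map τ.toFun LinearMap.id))

/-- Morphisms of dg algebras. -/
structure DGAlgebraHom (A B : DGAlgebra) where
  toLinearMap : A.carrier →ₗ[ℚ] B.carrier
  mem : ∀ (n : ℤ), ∀ x ∈ A.grading n, toLinearMap x ∈ B.grading n
  chain : toLinearMap.comp A.d = B.d.comp toLinearMap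
  map_one : toLinearMap A.one = B.one
  map_mul : ∀ x y : A.carrier, toLinearMap (A.mul x y) = B.mul (toLinearMap x) (toLinearMap y)

/-- Data exhibiting a dg algebra as the cobar construction `ΩC` of a coaugmented
dg coalgebra `C`, via the universal twisting chain `t : C ⇝ ΩC`:
dg algebra maps `ΩC → A` correspond bijectively to twisting chains `C ⇝ A`
vanishing on the coaugmentation. -/
structure CobarData (C : CoaugDGCoalgebra) where
  alg : DGAlgebra
  t : TwistingChain C.toDGCoalgebra alg
  t_one : t.toFun C.one = 0
  univ : ∀ (A : DGAlgebra) (τ : TwistingChain C.toDGCoalgebra A), τ.toFun C.one = 0 →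
    ∃! F : DGAlgebraHom alg A, F.toLinearMap.comp t.toFun = τ.toFun

/-- A morphism of `C`-comodules is a `t`-equivalence if the induced morphism of twisted
extensions `ΩC ⊗_t N → ΩC ⊗_t M` is a quasi-isomorphism. -/
def IsTEquiv (C : CoaugDGCoalgebra) (Ω : CobarData C) (N M : DGComodule C.toDGCoalgebra)
    (f : N.carrier →ₗ[ℚ] M.carrier) : Prop :=
  IsQuasiIso (extDiff C.toDGCoalgebra Ω.alg Ω.t N.carrier N.d N.coact)
    (extDiff C.toDGCoalgebra Ω.alg Ω.t M.carrier M.d M.coact)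
    (TensorProduct.map LinearMap.id f)

/-! ## Statement 2: the unit of the Koszul adjunction is a quasi-isomorphism -/

/-- The unit `N → t_* t^! N = C ⊗^t (ΩC ⊗_t N)`, `n ↦ n₍₀₎ ⊗ 1 ⊗ n₍₁₎`. -/
def cobarUnit (C : CoaugDGCoalgebra) (Ω : CobarData C)
    (N : DGComodule C.toDGCoalgebra) :
    N.carrier →ₗ[ℚ] C.carrier ⊗[ℚ] (Ω.alg.carrier ⊗[ℚ] N.carrier) :=
  (TensorProduct.map LinearMap.id
      ((TensorProduct.mk ℚ Ω.alg.carrier N.carrier) Ω.alg.one)).comp N.coact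

/-! ## Helper lemmas: parity operators -/

section CobarHelpers

variable {V W : Type} [AddCommGroup V] [Module ℚ V] [AddCommGroup W] [Module ℚ W]

theorem parityOf_apply_mem (g : ℤ → Submodule ℚ V) [DirectSum.Decomposition g] {n : ℤ} {x : V}
    (hx : x ∈ g n) : parityOf g x = ((-1 : ℚ) ^ n) • x := by
  have h : DirectSum.decomposeLinearEquiv g x = DirectSum.lof ℚ ℤ (fun i => g i) n ⟨x, hx⟩ :=
    DirectSum.decomposeLinearEquiv_apply_coe g n ⟨x, hx⟩
  simp [parityOf, signOpOf, h, DirectSum.toModule_lof]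

/-- Two linear maps agreeing on homogeneous elements are equal. -/
theorem lin_ext_homog (g : ℤ → Submodule ℚ V) [DirectSum.Decomposition g]
    {f f' : V →ₗ[ℚ] W} (h : ∀ n, ∀ x ∈ g n, f x = f' x) : f = f' := by
  apply DirectSum.decompose_lhom_ext (R := ℚ) g
  intro i
  ext x
  exact h i x x.2

theorem negOne_zpow_sq (n : ℤ) : ((-1 : ℚ) ^ n) * ((-1 : ℚ) ^ n) = 1 := by
  rw [← mul_zpow]; simp

theorem negOne_zpow_sub_one (n : ℤ) : ((-1 : ℚ) ^ (n - 1)) = - ((-1 : ℚ) ^ n) := by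
  rw [zpow_sub_one₀ (by norm_num)]; norm_num

theorem negOne_zpow_add_one (n : ℤ) : ((-1 : ℚ) ^ (n + 1)) = - ((-1 : ℚ) ^ n) := by
  rw [zpow_add_one₀ (by norm_num)]; norm_num

theorem parityOf_parityOf (g : ℤ → Submodule ℚ V) [DirectSum.Decomposition g] (x : V) :
    parityOf g (parityOf g x) = x := by
  have : (parityOf g).comp (parityOf g) = LinearMap.id := by
    apply lin_ext_homog g
    intro n x hx
    simp only [LinearMap.comp_apply, LinearMap.id_apply]
    rw [parityOf_apply_mem g hx, map_smul, parityOf_apply_mem g hx, smul_smul, negOne_zpow_sq,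
      one_smul]
  exact LinearMap.congr_fun this x

/-- A degree `-1` map anticommutes with parity. -/
theorem parityOf_comm_neg (g : ℤ → Submodule ℚ V) [DirectSum.Decomposition g]
    (g' : ℤ → Submodule ℚ W) [DirectSum.Decomposition g'] (f : V →ₗ[ℚ] W)
    (hf : ∀ n, ∀ x ∈ g n, f x ∈ g' (n - 1)) (x : V) :
    parityOf g' (f x) = - f (parityOf g x) := by
  have : (parityOf g').comp f = - f.comp (parityOf g) := by
    apply lin_ext_homog g
    intro n x hx
    simp only [LinearMap.comp_apply, LinearMap.neg_apply]
    rw [parityOf_apply_mem g hx, parityOf_apply_mem g' (hf n x hx), map_smul,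
      negOne_zpow_sub_one, neg_smul]
  exact LinearMap.congr_fun this x

/-- The parity on a tensor product. -/
theorem parity_tensor (g : ℤ → Submodule ℚ V) [DirectSum.Decomposition g]
    (g' : ℤ → Submodule ℚ W) [DirectSum.Decomposition g'] {n : ℤ} {z : V ⊗[ℚ] W}
    (hz : z ∈ tensorGrading g g' n) :
    TensorProduct.map (parityOf g) (parityOf g') z = ((-1 : ℚ) ^ n) • z := by
  have : tensorGrading g g' n ≤ LinearMap.ker
      (TensorProduct.map (parityOf g) (parityOf g') - ((-1 : ℚ) ^ n) • LinearMap.id) := by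
    unfold tensorGrading
    apply iSup_le
    rintro ⟨⟨i, j⟩, hij⟩
    simp only at hij
    rw [LinearMap.range_le_ker_iff]
    apply TensorProduct.ext'
    intro x y
    simp only [LinearMap.comp_apply, TensorProduct.map_tmul, LinearMap.sub_apply,
      LinearMap.smul_apply, LinearMap.id_apply, LinearMap.zero_apply, Submodule.subtype_apply]
    rw [parityOf_apply_mem g x.2, parityOf_apply_mem g' y.2, TensorProduct.smul_tmul_smul,
      ← zpow_add₀ (by norm_num), hij, sub_self]
  have h := this hz
  rw [LinearMap.mem_ker, LinearMap.sub_apply, sub_eq_zero] at h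
  simpa using h

theorem tmul_mem_tensorGrading (g : ℤ → Submodule ℚ V) (g' : ℤ → Submodule ℚ W) {i j n : ℤ}
    {x : V} {y : W} (hx : x ∈ g i) (hy : y ∈ g' j) (h : i + j = n) :
    x ⊗ₜ[ℚ] y ∈ tensorGrading g g' n := by
  unfold tensorGrading
  refine Submodule.mem_iSup_of_mem ⟨(i, j), h⟩ ?_
  exact ⟨(⟨x, hx⟩ : g i) ⊗ₜ (⟨y, hy⟩ : g' j), by simp⟩

theorem tensorGrading_le (g : ℤ → Submodule ℚ V) (g' : ℤ → Submodule ℚ W) {n : ℤ}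
    {S : Submodule ℚ (V ⊗[ℚ] W)}
    (h : ∀ i j x y, x ∈ g i → y ∈ g' j → i + j = n → x ⊗ₜ[ℚ] y ∈ S) :
    tensorGrading g g' n ≤ S := by
  unfold tensorGrading
  apply iSup_le
  rintro ⟨⟨i, j⟩, hij⟩
  rintro _ ⟨z, rfl⟩
  induction z with
  | zero => simp
  | tmul x y => simpa using h i j x y x.2 y.2 hij
  | add a b ha hb => rw [map_add]; exact S.add_mem ha hb

/-- Linear maps on a tensor product agreeing on homogeneous pure tensors are equal. -/
theorem tensor_ext_homog (g : ℤ → Submodule ℚ V) [DirectSum.Decomposition g]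
    (g' : ℤ → Submodule ℚ W) [DirectSum.Decomposition g']
    {U : Type} [AddCommGroup U] [Module ℚ U] {f f' : V ⊗[ℚ] W →ₗ[ℚ] U}
    (h : ∀ i j x y, x ∈ g i → y ∈ g' j → f (x ⊗ₜ y) = f' (x ⊗ₜ y)) : f = f' := by
  apply TensorProduct.ext
  apply lin_ext_homog g
  intro i x hx
  apply lin_ext_homog g'
  intro j y hy
  exact h i j x y hx hy

/-- Criterion for a decomposition. -/
@[reducible]
def decompOfLin {G : ℤ → Submodule ℚ V} (f : V →ₗ[ℚ] DirectSum ℤ fun n => G n)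
    (h1 : ∀ x, DirectSum.coeLinearMap G (f x) = x)
    (h2 : ∀ n (x : V) (hx : x ∈ G n), f x = DirectSum.lof ℚ ℤ (fun n => G n) n ⟨x, hx⟩) :
    DirectSum.Decomposition G :=
  DirectSum.Decomposition.ofLinearMap G f (LinearMap.ext h1) (by
    apply DirectSum.linearMap_ext
    intro i
    ext x : 1
    simp [h2 i x x.2])

/-- Homogeneous piece of the decomposition of the tensor product. -/
def tensorPiece (g : ℤ → Submodule ℚ V) (g' : ℤ → Submodule ℚ W) (i j : ℤ) :
    g i →ₗ[ℚ] g' j →ₗ[ℚ] DirectSum ℤ fun n => tensorGrading g g' n :=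
  LinearMap.mk₂ ℚ (fun x y => DirectSum.lof ℚ ℤ (fun n => tensorGrading g g' n) (i + j)
      ⟨x.1 ⊗ₜ y.1, tmul_mem_tensorGrading g g' x.2 y.2 rfl⟩)
    (by intro a b c; rw [← map_add]; congr 1; ext1; simp [TensorProduct.add_tmul])
    (by intro a b c; rw [← map_smul]; congr 1)
    (by intro a b c; rw [← map_add]; congr 1; ext1; simp [TensorProduct.tmul_add])
    (by intro a b c; rw [← map_smul]; congr 1; ext1; simp)

def tensorDecFun (g : ℤ → Submodule ℚ V) [DirectSum.Decomposition g]
    (g' : ℤ → Submodule ℚ W) [DirectSum.Decomposition g'] :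
    V ⊗[ℚ] W →ₗ[ℚ] DirectSum ℤ fun n => tensorGrading g g' n :=
  TensorProduct.lift
    ((DirectSum.toModule ℚ ℤ _ (fun i =>
        (((DirectSum.toModule ℚ ℤ _ (fun j => (tensorPiece g g' i j).flip)).comp
            (DirectSum.decomposeLinearEquiv g').toLinearMap).flip))).comp
      (DirectSum.decomposeLinearEquiv g).toLinearMap)

theorem tensorDecFun_tmul (g : ℤ → Submodule ℚ V) [DirectSum.Decomposition g]
    (g' : ℤ → Submodule ℚ W) [DirectSum.Decomposition g'] {i j n : ℤ} {x : V} {y : W}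
    (hx : x ∈ g i) (hy : y ∈ g' j) (h : i + j = n) :
    tensorDecFun g g' (x ⊗ₜ y) = DirectSum.lof ℚ ℤ (fun n => tensorGrading g g' n) n
      ⟨x ⊗ₜ y, tmul_mem_tensorGrading g g' hx hy h⟩ := by
  subst h
  have h1 : DirectSum.decomposeLinearEquiv g x = DirectSum.lof ℚ ℤ (fun i => g i) i ⟨x, hx⟩ :=
    DirectSum.decomposeLinearEquiv_apply_coe g i ⟨x, hx⟩
  have h2 : DirectSum.decomposeLinearEquiv g' y = DirectSum.lof ℚ ℤ (fun i => g' i) j ⟨y, hy⟩ :=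
    DirectSum.decomposeLinearEquiv_apply_coe g' j ⟨y, hy⟩
  simp [tensorDecFun, h1, h2, tensorPiece]

/-- The tensor product grading is a decomposition. -/
@[reducible]
def tensorDecomp (g : ℤ → Submodule ℚ V) [DirectSum.Decomposition g]
    (g' : ℤ → Submodule ℚ W) [DirectSum.Decomposition g'] :
    DirectSum.Decomposition (tensorGrading g g') :=
  decompOfLin (tensorDecFun g g')
    (by
      intro x
      have : (DirectSum.coeLinearMap (tensorGrading g g')).comp (tensorDecFun g g')
          = LinearMap.id := by
        apply tensor_ext_homog g g'
        intro i j x y hx hy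
        rw [LinearMap.comp_apply, tensorDecFun_tmul g g' hx hy rfl]
        simp
      exact LinearMap.congr_fun this x)
    (by
      intro n x hx
      have key : tensorGrading g g' n ≤ Submodule.map (tensorGrading g g' n).subtype
          (LinearMap.eqLocus ((tensorDecFun g g').comp (tensorGrading g g' n).subtype)
          (DirectSum.lof ℚ ℤ (fun n => tensorGrading g g' n) n)) := by
        apply tensorGrading_le
        intro i j x y hx hy h
        refine ⟨⟨x ⊗ₜ y, tmul_mem_tensorGrading g g' hx hy h⟩, ?_, rfl⟩
        exact tensorDecFun_tmul g g' hx hy h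
      obtain ⟨⟨y, hy⟩, hy1, hy2⟩ := key hx
      simp only [Submodule.subtype_apply] at hy2
      subst hy2
      exact hy1)

/-- The product grading, the second factor being shifted by one. -/
def prodGrading (g : ℤ → Submodule ℚ V) (g' : ℤ → Submodule ℚ W) (n : ℤ) :
    Submodule ℚ (V × W) := (g n).prod (g' (n + 1))

def prodInl (g : ℤ → Submodule ℚ V) (g' : ℤ → Submodule ℚ W) (n : ℤ) :
    g n →ₗ[ℚ] prodGrading g g' n :=
  LinearMap.codRestrict _ ((LinearMap.inl ℚ V W).comp (g n).subtype)
    (fun x => ⟨x.2, Submodule.zero_mem _⟩)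

def prodInr (g : ℤ → Submodule ℚ V) (g' : ℤ → Submodule ℚ W) (n : ℤ) :
    g' n →ₗ[ℚ] prodGrading g g' (n - 1) :=
  LinearMap.codRestrict _ ((LinearMap.inr ℚ V W).comp (g' n).subtype)
    (fun x => ⟨Submodule.zero_mem _, by
      have h : n - 1 + 1 = n := by ring
      simp [h]⟩)

def prodDecFun (g : ℤ → Submodule ℚ V) [DirectSum.Decomposition g]
    (g' : ℤ → Submodule ℚ W) [DirectSum.Decomposition g'] :
    V × W →ₗ[ℚ] DirectSum ℤ fun n => prodGrading g g' n :=
  LinearMap.coprod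
    ((DirectSum.toModule ℚ ℤ _ (fun n => (DirectSum.lof ℚ ℤ (fun n => prodGrading g g' n) n).comp
      (prodInl g g' n))).comp (DirectSum.decomposeLinearEquiv g).toLinearMap)
    ((DirectSum.toModule ℚ ℤ _ (fun n =>
      (DirectSum.lof ℚ ℤ (fun n => prodGrading g g' n) (n - 1)).comp
      (prodInr g g' n))).comp (DirectSum.decomposeLinearEquiv g').toLinearMap)

theorem prodDecFun_inl (g : ℤ → Submodule ℚ V) [DirectSum.Decomposition g]
    (g' : ℤ → Submodule ℚ W) [DirectSum.Decomposition g'] {n : ℤ} {x : V} (hx : x ∈ g n) :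
    prodDecFun g g' (x, 0) = DirectSum.lof ℚ ℤ (fun n => prodGrading g g' n) n
      ⟨(x, 0), hx, Submodule.zero_mem _⟩ := by
  have h1 : DirectSum.decomposeLinearEquiv g x = DirectSum.lof ℚ ℤ (fun i => g i) n ⟨x, hx⟩ :=
    DirectSum.decomposeLinearEquiv_apply_coe g n ⟨x, hx⟩
  simp only [prodDecFun, LinearMap.coprod_apply, LinearMap.comp_apply, LinearEquiv.coe_coe, h1,
    map_zero, add_zero, DirectSum.toModule_lof]
  rfl

theorem prodDecFun_inr (g : ℤ → Submodule ℚ V) [DirectSum.Decomposition g]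
    (g' : ℤ → Submodule ℚ W) [DirectSum.Decomposition g'] {n : ℤ} {x : W} (hx : x ∈ g' (n + 1)) :
    prodDecFun g g' (0, x) = DirectSum.lof ℚ ℤ (fun n => prodGrading g g' n) n
      ⟨(0, x), Submodule.zero_mem _, hx⟩ := by
  obtain ⟨m, rfl⟩ : ∃ m, n = m - 1 := ⟨n + 1, by ring⟩
  have hx' : x ∈ g' m := by simpa using hx
  have h1 : DirectSum.decomposeLinearEquiv g' x = DirectSum.lof ℚ ℤ (fun i => g' i) m ⟨x, hx'⟩ :=
    DirectSum.decomposeLinearEquiv_apply_coe g' m ⟨x, hx'⟩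
  simp only [prodDecFun, LinearMap.coprod_apply, LinearMap.comp_apply, LinearEquiv.coe_coe, h1,
    map_zero, zero_add, DirectSum.toModule_lof]
  rfl

@[reducible]
def prodDecomp (g : ℤ → Submodule ℚ V) [DirectSum.Decomposition g]
    (g' : ℤ → Submodule ℚ W) [DirectSum.Decomposition g'] :
    DirectSum.Decomposition (prodGrading g g') :=
  decompOfLin (prodDecFun g g')
    (by
      intro x
      have : (DirectSum.coeLinearMap (prodGrading g g')).comp (prodDecFun g g')
          = LinearMap.id := by
        apply LinearMap.prod_ext
        · apply lin_ext_homog g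
          intro n x hx
          simp only [LinearMap.comp_apply, LinearMap.inl_apply]
          rw [prodDecFun_inl g g' hx]
          simp
        · apply lin_ext_homog g'
          intro n x hx
          obtain ⟨m, rfl⟩ : ∃ m, n = m + 1 := ⟨n - 1, by ring⟩
          simp only [LinearMap.comp_apply, LinearMap.inr_apply]
          rw [prodDecFun_inr g g' hx]
          simp
      exact LinearMap.congr_fun this x)
    (by
      rintro n ⟨x, y⟩ ⟨hx, hy⟩
      have : ((x, y) : V × W) = (x, 0) + (0, y) := by simp
      rw [show prodDecFun g g' (x, y) = prodDecFun g g' (x, 0) + prodDecFun g g' (0, y) by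
        rw [← map_add, ← this], prodDecFun_inl g g' hx, prodDecFun_inr g g' hy, ← map_add]
      congr 1
      ext1
      simp)

/-! ## The twisted complex `C ⊗^t A` -/

theorem DGAlgebra.leibnizP (A : DGAlgebra) (x y : A.carrier) :
    A.d (A.mul x y) = A.mul (A.d x) y + A.mul (parityOf A.grading x) (A.d y) := by
  have : A.d.comp (A.mul.flip y) = (A.mul.flip y).comp A.d
      + (A.mul.flip (A.d y)).comp (parityOf A.grading) := by
    apply lin_ext_homog A.grading
    intro n x hx
    simp only [LinearMap.comp_apply, LinearMap.add_apply, LinearMap.flip_apply]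
    rw [A.leibniz n x y hx, parityOf_apply_mem A.grading hx, map_smul, LinearMap.smul_apply]
  exact LinearMap.congr_fun this x

theorem DGCoalgebra.comul_parity (C : DGCoalgebra) (c : C.carrier) :
    C.comul (parityOf C.grading c)
      = TensorProduct.map (parityOf C.grading) (parityOf C.grading) (C.comul c) := by
  have : C.comul.comp (parityOf C.grading)
      = (TensorProduct.map (parityOf C.grading) (parityOf C.grading)).comp C.comul := by
    apply lin_ext_homog C.grading
    intro n x hx
    simp only [LinearMap.comp_apply]
    rw [parityOf_apply_mem C.grading hx, map_smul, parity_tensor _ _ (C.comul_mem n x hx)]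
  exact LinearMap.congr_fun this c

theorem DGCoalgebra.counit_parity (C : DGCoalgebra) (c : C.carrier) :
    C.counit (parityOf C.grading c) = C.counit c := by
  have : C.counit.comp (parityOf C.grading) = C.counit := by
    apply lin_ext_homog C.grading
    intro n x hx
    simp only [LinearMap.comp_apply]
    rw [parityOf_apply_mem C.grading hx, map_smul]
    by_cases hn : n = 0
    · subst hn; simp
    · rw [C.counit_zero n hn x hx, smul_zero]
  exact LinearMap.congr_fun this c

theorem DGVect.d_d (V : DGVect) (x : V.carrier) : V.d (V.d x) = 0 :=
  LinearMap.congr_fun V.d_sq x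

theorem DGVect.parity_d (V : DGVect) (x : V.carrier) :
    parityOf V.grading (V.d x) = - V.d (parityOf V.grading x) :=
  parityOf_comm_neg V.grading V.grading V.d V.d_mem x

section Twisted

variable (C : DGCoalgebra) (A : DGAlgebra) (t : TwistingChain C A)

/-- The twisted differential on `C ⊗ A`. -/
def twD : C.carrier ⊗[ℚ] A.carrier →ₗ[ℚ] C.carrier ⊗[ℚ] A.carrier :=
  coextDiff C A t A.carrier A.d A.mulMap

/-- `x ⊗ y ↦ Px ⊗ t(y) a`. -/
def twPhi (a : A.carrier) : C.carrier ⊗[ℚ] C.carrier →ₗ[ℚ] C.carrier ⊗[ℚ] A.carrier :=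
  TensorProduct.map (parityOf C.grading) ((A.mul.flip a).comp t.toFun)

/-- Right multiplication on `C ⊗ A`. -/
def twR (b : A.carrier) : C.carrier ⊗[ℚ] A.carrier →ₗ[ℚ] C.carrier ⊗[ℚ] A.carrier :=
  TensorProduct.map LinearMap.id (A.mul.flip b)

/-- Parity on `C ⊗ A`. -/
def twP : C.carrier ⊗[ℚ] A.carrier →ₗ[ℚ] C.carrier ⊗[ℚ] A.carrier :=
  TensorProduct.map (parityOf C.grading) (parityOf A.grading)

theorem twPhi_tmul (a : A.carrier) (x y : C.carrier) :
    twPhi C A t a (x ⊗ₜ y) = parityOf C.grading x ⊗ₜ A.mul (t.toFun y) a := by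
  simp [twPhi]

theorem twR_tmul (b : A.carrier) (x : C.carrier) (a : A.carrier) :
    twR C A b (x ⊗ₜ a) = x ⊗ₜ A.mul a b := by
  simp [twR]

theorem twD_tmul (c : C.carrier) (a : A.carrier) :
    twD C A t (c ⊗ₜ a) = C.d c ⊗ₜ a + parityOf C.grading c ⊗ₜ A.d a
      + twPhi C A t a (C.comul c) := by
  simp only [twD, coextDiff, coextDiffFrom, coextCoact, LinearMap.add_apply,
    TensorProduct.map_tmul, LinearMap.id_apply, LinearMap.comp_apply, LinearEquiv.coe_coe]
  congr 1
  generalize C.comul c = z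
  induction z with
  | zero => simp
  | tmul x y => simp [twPhi_tmul, DGAlgebra.mulMap]
  | add u v hu hv => simp only [TensorProduct.add_tmul, map_add, hu, hv]

theorem twist_apply (c : C.carrier) :
    A.d (t.toFun c) + t.toFun (C.d c) + A.mulMap
      (TensorProduct.map (t.toFun.comp (parityOf C.grading)) t.toFun (C.comul c)) = 0 :=
  LinearMap.congr_fun t.twist c

/-- `x ⊗ (y ⊗ w) ↦ x ⊗ tP(y) t(w) a`. -/
def twPsi (a : A.carrier) :
    C.carrier ⊗[ℚ] (C.carrier ⊗[ℚ] C.carrier) →ₗ[ℚ] C.carrier ⊗[ℚ] A.carrier :=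
  TensorProduct.map LinearMap.id ((A.mul.flip a).comp (A.mulMap.comp
      (TensorProduct.map (t.toFun.comp (parityOf C.grading)) t.toFun)))

theorem twD_sq_aux (a : A.carrier) (z : C.carrier ⊗[ℚ] C.carrier) :
    twPhi C A t a (TensorProduct.map C.d LinearMap.id z
        + TensorProduct.map (parityOf C.grading) C.d z)
      + twPhi C A t (A.d a) (TensorProduct.map (parityOf C.grading) (parityOf C.grading) z)
      + twD C A t (twPhi C A t a z)
      = twPsi C A t a ((TensorProduct.assoc ℚ C.carrier C.carrier C.carrier)
          (TensorProduct.map C.comul LinearMap.id z))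
        - twPsi C A t a (TensorProduct.map LinearMap.id C.comul z) := by
  induction z with
  | zero => simp
  | add u v hu hv =>
    simp only [map_add] at hu hv ⊢
    rw [add_sub_add_comm, ← hu, ← hv]
    abel
  | tmul x y =>
    have hT : twPhi C A t (A.mul (t.toFun y) a) (C.comul (parityOf C.grading x))
        = twPsi C A t a ((TensorProduct.assoc ℚ C.carrier C.carrier C.carrier)
          (C.comul x ⊗ₜ y)) := by
      rw [C.comul_parity]
      generalize C.comul x = w
      induction w with
      | zero => simp
      | add u v hu hv => simp only [TensorProduct.add_tmul, map_add, hu, hv]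
      | tmul u v =>
        simp [twPhi_tmul, twPsi, DGAlgebra.mulMap, parityOf_parityOf, A.mul_assoc']
    have hy := twist_apply C A t y
    have hdt : A.mulMap (TensorProduct.map (t.toFun.comp (parityOf C.grading)) t.toFun
        (C.comul y)) = - (A.d (t.toFun y)) - t.toFun (C.d y) := by
      rw [← sub_eq_zero, ← hy]; abel
    have hP : parityOf A.grading (t.toFun y) = - t.toFun (parityOf C.grading y) :=
      parityOf_comm_neg C.grading A.grading t.toFun t.mem y
    have hPd : parityOf C.grading (C.d x) = - C.d (parityOf C.grading x) := C.toDGVect.parity_d x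
    simp only [TensorProduct.map_tmul, LinearMap.id_apply, map_add,
      twPhi_tmul, twD_tmul, hT, parityOf_parityOf, A.leibnizP, hP, hPd]
    simp only [twPsi, TensorProduct.map_tmul, LinearMap.id_apply, LinearMap.comp_apply, hdt,
      LinearMap.flip_apply, map_sub, map_neg, LinearMap.neg_apply,
      TensorProduct.tmul_add, TensorProduct.tmul_sub, TensorProduct.tmul_neg,
      TensorProduct.neg_tmul]
    abel

theorem twD_twD (m : C.carrier ⊗[ℚ] A.carrier) : twD C A t (twD C A t m) = 0 := by
  induction m with
  | zero => simp
  | add u v hu hv => simp only [map_add, hu, hv, add_zero]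
  | tmul c a =>
    have h := twD_sq_aux C A t a (C.comul c)
    have hco : (TensorProduct.assoc ℚ C.carrier C.carrier C.carrier)
          (TensorProduct.map C.comul LinearMap.id (C.comul c))
        = TensorProduct.map LinearMap.id C.comul (C.comul c) := LinearMap.congr_fun C.coassoc c
    have hch : C.comul (C.d c) = TensorProduct.map C.d LinearMap.id (C.comul c)
        + TensorProduct.map (parityOf C.grading) C.d (C.comul c) :=
      LinearMap.congr_fun C.comul_chain c
    rw [hco, sub_self, ← hch, ← C.comul_parity] at h
    have hPd : parityOf C.grading (C.d c) = - C.d (parityOf C.grading c) := C.toDGVect.parity_d c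
    have hdd : C.d (C.d c) = 0 := C.toDGVect.d_d c
    have hdd' : A.d (A.d a) = 0 := A.toDGVect.d_d a
    rw [twD_tmul, map_add, map_add, twD_tmul, twD_tmul, hPd, hdd, hdd']
    simp only [TensorProduct.zero_tmul, TensorProduct.tmul_zero, TensorProduct.neg_tmul]
    refine Eq.trans ?_ h
    abel

theorem twD_twR (b : A.carrier) (m : C.carrier ⊗[ℚ] A.carrier) :
    twD C A t (twR C A b m) = twR C A b (twD C A t m) + twR C A (A.d b) (twP C A m) := by
  induction m with
  | zero => simp
  | add u v hu hv => simp only [map_add, hu, hv]; abel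
  | tmul c a =>
    have h : twPhi C A t (A.mul a b) (C.comul c) = twR C A b (twPhi C A t a (C.comul c)) := by
      generalize C.comul c = z
      induction z with
      | zero => simp
      | add u v hu hv => simp only [map_add, hu, hv]
      | tmul x y => simp [twPhi_tmul, twR_tmul, A.mul_assoc']
    simp only [twR_tmul, twD_tmul, map_add, h, A.leibnizP, twP, TensorProduct.map_tmul,
      TensorProduct.tmul_add]
    abel

theorem twD_mem (n : ℤ) (m : C.carrier ⊗[ℚ] A.carrier)
    (hm : m ∈ tensorGrading C.grading A.grading n) :
    twD C A t m ∈ tensorGrading C.grading A.grading (n - 1) := by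
  have : tensorGrading C.grading A.grading n
      ≤ (tensorGrading C.grading A.grading (n - 1)).comap (twD C A t) := by
    apply tensorGrading_le
    intro i j x y hx hy hij
    rw [Submodule.mem_comap, twD_tmul]
    refine Submodule.add_mem _ (Submodule.add_mem _ ?_ ?_) ?_
    · exact tmul_mem_tensorGrading _ _ (C.d_mem i x hx) hy (by omega)
    · rw [parityOf_apply_mem _ hx]
      exact tmul_mem_tensorGrading _ _ (Submodule.smul_mem _ _ hx) (A.d_mem j y hy) (by omega)
    · have h2 : tensorGrading C.grading C.grading i
          ≤ (tensorGrading C.grading A.grading (n - 1)).comap (twPhi C A t y) := by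
        apply tensorGrading_le
        intro k l u v hu hv hkl
        rw [Submodule.mem_comap, twPhi_tmul, parityOf_apply_mem _ hu]
        exact tmul_mem_tensorGrading _ _ (Submodule.smul_mem _ _ hu)
          (A.mul_mem _ _ _ _ (t.mem l v hv) hy) (by omega)
      exact h2 (C.comul_mem i x hx)
  exact this hm

theorem twR_mem (i j n : ℤ) (hn : i + j = n) (m : C.carrier ⊗[ℚ] A.carrier) (b : A.carrier)
    (hm : m ∈ tensorGrading C.grading A.grading i) (hb : b ∈ A.grading j) :
    twR C A b m ∈ tensorGrading C.grading A.grading n := by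
  have : tensorGrading C.grading A.grading i
      ≤ (tensorGrading C.grading A.grading n).comap (twR C A b) := by
    apply tensorGrading_le
    intro k l x y hx hy hij
    rw [Submodule.mem_comap, twR_tmul]
    exact tmul_mem_tensorGrading _ _ hx (A.mul_mem _ _ _ _ hy hb) (by omega)
  exact this hm

end Twisted

/-! ## The ground field as a dg algebra -/

def ratGrading (n : ℤ) : Submodule ℚ ℚ := if n = 0 then ⊤ else ⊥

theorem ratGrading_zero (x : ℚ) : x ∈ ratGrading 0 := by simp [ratGrading]

theorem ratGrading_ne {n : ℤ} (hn : n ≠ 0) {x : ℚ} (hx : x ∈ ratGrading n) : x = 0 := by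
  simpa [ratGrading, hn] using hx

@[reducible]
def ratDecomp : DirectSum.Decomposition ratGrading :=
  decompOfLin ((DirectSum.lof ℚ ℤ (fun n => ratGrading n) 0).comp
      (LinearMap.codRestrict (ratGrading 0) LinearMap.id ratGrading_zero))
    (by intro x; simp)
    (by
      intro n x hx
      by_cases hn : n = 0
      · subst hn; rfl
      · have := ratGrading_ne hn hx
        subst this
        rw [map_zero]
        exact (map_zero (DirectSum.lof ℚ ℤ (fun n => ratGrading n) n)).symm)

/-- `ℚ` as a dg algebra. -/
def ratAlg : DGAlgebra where
  carrier := ℚ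
  grading := ratGrading
  isDecomp := ratDecomp
  d := 0
  d_mem := by intro n x hx; simp
  d_sq := by simp
  mul := LinearMap.mul ℚ ℚ
  one := (1 : ℚ)
  one_mem := ratGrading_zero _
  mul_mem := by
    intro i j x y hx hy
    by_cases hi : i = 0
    · by_cases hj : j = 0
      · subst hi hj; exact ratGrading_zero _
      · rw [ratGrading_ne hj hy]; simp
    · rw [ratGrading_ne hi hx]; simp
  mul_assoc' := by intro x y z; simp [mul_assoc]
  one_mul' := by intro x; simp
  mul_one' := by intro x; simp
  leibniz := by intro i x y hx; simp

/-- An augmentation of a dg algebra. -/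
structure Augm (A : DGAlgebra) where
  e : A.carrier →ₗ[ℚ] ℚ
  e_one : e A.one = 1
  e_mul : ∀ x y, e (A.mul x y) = e x * e y
  e_d : ∀ x, e (A.d x) = 0
  e_deg : ∀ n, n ≠ 0 → ∀ x ∈ A.grading n, e x = 0

theorem Augm.e_parity {A : DGAlgebra} (E : Augm A) (x : A.carrier) :
    E.e (parityOf A.grading x) = E.e x := by
  have : E.e.comp (parityOf A.grading) = E.e := by
    apply lin_ext_homog A.grading
    intro n x hx
    simp only [LinearMap.comp_apply]
    rw [parityOf_apply_mem A.grading hx, map_smul]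
    by_cases hn : n = 0
    · subst hn; simp
    · rw [E.e_deg n hn x hx, smul_zero]
  exact LinearMap.congr_fun this x

theorem exists_augm (C : CoaugDGCoalgebra) (Ω : CobarData C) :
    ∃ E : Augm Ω.alg, ∀ c, E.e (Ω.t.toFun c) = 0 := by
  let τ : TwistingChain C.toDGCoalgebra ratAlg :=
    { toFun := 0
      mem := by intro n x hx; exact Submodule.zero_mem _
      twist := by
        ext c
        simp }
  obtain ⟨F, hF, -⟩ := Ω.univ ratAlg τ rfl
  refine ⟨⟨F.toLinearMap, F.map_one, F.map_mul, ?_, ?_⟩, ?_⟩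
  · intro x
    exact LinearMap.congr_fun F.chain x
  · intro n hn x hx
    exact ratGrading_ne hn (F.mem n x hx)
  · intro c
    exact LinearMap.congr_fun hF c

theorem CoaugDGCoalgebra.d_one (C : CoaugDGCoalgebra) : C.d C.one = 0 := by
  have h := C.d_mem 0 C.one C.one_mem
  rw [C.nonneg (0 - 1) (by norm_num)] at h
  simpa using h

theorem DGAlgebra.d_one (A : DGAlgebra) : A.d A.one = 0 := by
  have h := A.leibniz 0 A.one A.one A.one_mem
  rw [A.one_mul', A.mul_one', A.one_mul'] at h
  simpa using h

section Cone

variable (C : CoaugDGCoalgebra) (A : DGAlgebra) (t : TwistingChain C.toDGCoalgebra A)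

theorem twD_one (ht : t.toFun C.one = 0) (a : A.carrier) :
    twD C.toDGCoalgebra A t (C.one ⊗ₜ a) = C.one ⊗ₜ A.d a := by
  rw [twD_tmul, C.d_one, C.comul_one, twPhi_tmul, ht, parityOf_apply_mem _ C.one_mem]
  simp

/-- `a ↦ 1 ⊗ a - e(a) 1 ⊗ 1`. -/
def coneIota (E : Augm A) : A.carrier →ₗ[ℚ] C.carrier ⊗[ℚ] A.carrier :=
  TensorProduct.mk ℚ C.carrier A.carrier C.one
    - E.e.smulRight (C.one ⊗ₜ[ℚ] A.one)

theorem coneIota_apply (E : Augm A) (a : A.carrier) :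
    coneIota C A E a = C.one ⊗ₜ a - E.e a • (C.one ⊗ₜ[ℚ] A.one) := by
  simp [coneIota]

theorem coneIota_mul (E : Augm A) (a b : A.carrier) :
    coneIota C A E (A.mul a b)
      = twR C.toDGCoalgebra A b (coneIota C A E a) + E.e a • coneIota C A E b := by
  simp only [coneIota_apply, map_sub, map_smul, twR_tmul, A.one_mul', E.e_mul, mul_smul, smul_sub]
  abel

/-- The differential of the cone algebra. -/
def coneD (E : Augm A) :
    A.carrier × (C.carrier ⊗[ℚ] A.carrier) →ₗ[ℚ] A.carrier × (C.carrier ⊗[ℚ] A.carrier) :=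
  LinearMap.prod (A.d.comp (LinearMap.fst ℚ _ _))
    ((coneIota C A E).comp (LinearMap.fst ℚ _ _)
      - (twD C.toDGCoalgebra A t).comp (LinearMap.snd ℚ _ _))

theorem coneD_apply (E : Augm A) (a : A.carrier) (m : C.carrier ⊗[ℚ] A.carrier) :
    coneD C A t E (a, m) = (A.d a, coneIota C A E a - twD C.toDGCoalgebra A t m) := rfl

/-- The product of the cone algebra. -/
def coneMul (E : Augm A) :
    A.carrier × (C.carrier ⊗[ℚ] A.carrier) →ₗ[ℚ] A.carrier × (C.carrier ⊗[ℚ] A.carrier)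
      →ₗ[ℚ] A.carrier × (C.carrier ⊗[ℚ] A.carrier) :=
  LinearMap.mk₂ ℚ (fun x y => (A.mul x.1 y.1, twR C.toDGCoalgebra A y.1 x.2 + E.e x.1 • y.2))
    (by
      intro x x' y
      ext1
      · simp
      · simp only [Prod.fst_add, Prod.snd_add, map_add, add_smul]; abel)
    (by
      intro r x y
      ext1
      · simp
      · simp [mul_smul])
    (by
      intro x y y'
      ext1
      · simp
      · simp only [Prod.fst_add, Prod.snd_add, map_add, smul_add, twR, TensorProduct.map_add_right,
          LinearMap.add_apply]
        abel)
    (by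
      intro r x y
      ext1
      · simp
      · simp [twR, TensorProduct.map_smul_right, smul_comm r])

theorem coneMul_apply (E : Augm A) (a b : A.carrier) (m k : C.carrier ⊗[ℚ] A.carrier) :
    coneMul C A E (a, m) (b, k) = (A.mul a b, twR C.toDGCoalgebra A b m + E.e a • k) := rfl

theorem twR_twR (b b' : A.carrier) (m : C.carrier ⊗[ℚ] A.carrier) :
    twR C.toDGCoalgebra A b' (twR C.toDGCoalgebra A b m)
      = twR C.toDGCoalgebra A (A.mul b b') m := by
  induction m with
  | zero => simp
  | add u v hu hv => simp only [map_add, hu, hv]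
  | tmul x y => simp [twR_tmul, A.mul_assoc']

theorem twR_one (m : C.carrier ⊗[ℚ] A.carrier) : twR C.toDGCoalgebra A A.one m = m := by
  induction m with
  | zero => simp
  | add u v hu hv => simp only [map_add, hu, hv]
  | tmul x y => simp [twR_tmul, A.mul_one']

theorem coneIota_mem (E : Augm A) (n : ℤ) (a : A.carrier) (ha : a ∈ A.grading n) :
    coneIota C A E a ∈ tensorGrading C.grading A.grading n := by
  rw [coneIota_apply]
  refine Submodule.sub_mem _ (tmul_mem_tensorGrading _ _ C.one_mem ha (by omega)) ?_
  by_cases hn : n = 0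
  · subst hn
    exact Submodule.smul_mem _ _ (tmul_mem_tensorGrading _ _ C.one_mem A.one_mem (by omega))
  · rw [E.e_deg n hn a ha, zero_smul]
    exact Submodule.zero_mem _

/-- The cone algebra. -/
def coneAlg (ht : t.toFun C.one = 0) (E : Augm A) : DGAlgebra where
  carrier := A.carrier × (C.carrier ⊗[ℚ] A.carrier)
  grading := prodGrading A.grading (tensorGrading C.grading A.grading)
  isDecomp :=
    letI := tensorDecomp C.grading A.grading
    prodDecomp A.grading (tensorGrading C.grading A.grading)
  d := coneD C A t E
  d_mem := by
    rintro n ⟨a, m⟩ ⟨ha, hm⟩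
    refine ⟨A.d_mem n a ha, ?_⟩
    have h := twD_mem C.toDGCoalgebra A t _ m hm
    have h' := coneIota_mem C A E n a ha
    simp only [coneD_apply]
    rw [show n + 1 - 1 = n by ring] at h
    rw [show n - 1 + 1 = n by ring]
    exact Submodule.sub_mem _ h' h
  d_sq := by
    apply LinearMap.ext
    rintro ⟨a, m⟩
    have hd : A.d (A.d a) = 0 := A.toDGVect.d_d a
    simp only [LinearMap.comp_apply, coneD_apply, map_sub, twD_twD, coneIota_apply, map_smul,
      twD_one C A t ht, E.e_d, hd, A.d_one]
    ext1 <;> simp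
  mul := coneMul C A E
  one := (A.one, 0)
  one_mem := ⟨A.one_mem, Submodule.zero_mem _⟩
  mul_mem := by
    rintro i j ⟨a, m⟩ ⟨b, k⟩ ⟨ha, hm⟩ ⟨hb, hk⟩
    refine ⟨A.mul_mem i j a b ha hb, ?_⟩
    simp only [coneMul_apply]
    refine Submodule.add_mem _ (twR_mem C.toDGCoalgebra A (i + 1) j _ (by ring) m b hm hb) ?_
    by_cases hi : i = 0
    · subst hi
      rw [show 0 + j + 1 = j + 1 by ring]
      exact Submodule.smul_mem _ _ hk
    · have : E.e a = 0 := E.e_deg i hi a ha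
      rw [this, zero_smul]
      exact Submodule.zero_mem _
  mul_assoc' := by
    rintro ⟨a, m⟩ ⟨b, k⟩ ⟨c, l⟩
    simp only [coneMul_apply, A.mul_assoc', map_add, map_smul, twR_twR, E.e_mul, smul_add,
      mul_smul, add_assoc]
  one_mul' := by
    rintro ⟨a, m⟩
    simp [coneMul_apply, A.one_mul', E.e_one]
  mul_one' := by
    rintro ⟨a, m⟩
    simp [coneMul_apply, A.mul_one', twR_one]
  leibniz := by
    rintro i ⟨a, m⟩ ⟨b, k⟩ ⟨ha, hm⟩
    have hP : twP C.toDGCoalgebra A m = - (((-1 : ℚ) ^ i) • m) := by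
      rw [← neg_smul, ← negOne_zpow_add_one]
      exact parity_tensor _ _ hm
    have he : ((-1 : ℚ) ^ i) * E.e a = E.e a := by
      by_cases hi : i = 0
      · subst hi; simp
      · have : E.e a = 0 := E.e_deg i hi a ha
        rw [this, mul_zero]
    simp only [coneMul_apply, coneD_apply, Prod.smul_mk, Prod.mk_add_mk, A.leibniz i a b ha,
      map_add, map_smul, map_sub, coneIota_mul, twD_twR, hP, E.e_d, smul_add, smul_sub, smul_smul,
      he, zero_smul, map_neg]
    ext1
    · rfl
    · simp only
      abel

/-- The twisting chain to the cone algebra: `c ↦ (tc, (c - ε(c)) ⊗ 1)`. -/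
def coneTau : C.carrier →ₗ[ℚ] A.carrier × (C.carrier ⊗[ℚ] A.carrier) :=
  LinearMap.prod t.toFun
    (((TensorProduct.mk ℚ C.carrier A.carrier).flip A.one).comp
      (LinearMap.id - C.counit.smulRight C.one))

theorem coneTau_apply (c : C.carrier) :
    coneTau C A t c = (t.toFun c, (c - C.counit c • C.one) ⊗ₜ A.one) := rfl

theorem counit_d (c : C.carrier) : C.counit (C.d c) = 0 := LinearMap.congr_fun C.counit_chain c

theorem counit_left (c : C.carrier) :
    TensorProduct.lid ℚ C.carrier (TensorProduct.map C.counit LinearMap.id (C.comul c)) = c :=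
  LinearMap.congr_fun C.counit_comul_left c

theorem coneTau_twist_aux (E : Augm A) (hE : ∀ c, E.e (t.toFun c) = 0)
    (z : C.carrier ⊗[ℚ] C.carrier) :
    TensorProduct.lift (coneMul C A E) (TensorProduct.map
      ((coneTau C A t).comp (parityOf C.grading)) (coneTau C A t) z)
    = (A.mulMap (TensorProduct.map (t.toFun.comp (parityOf C.grading)) t.toFun z),
      twPhi C.toDGCoalgebra A t A.one z - C.one ⊗ₜ t.toFun
        (TensorProduct.lid ℚ C.carrier (TensorProduct.map C.counit LinearMap.id z))) := by
  induction z with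
  | zero => simp; rfl
  | add u v hu hv =>
    simp only [map_add, hu, hv, TensorProduct.tmul_add, Prod.mk_add_mk]
    congr 1
    abel
  | tmul x y =>
    simp only [TensorProduct.map_tmul, LinearMap.comp_apply, coneTau_apply, TensorProduct.lift.tmul,
      coneMul_apply, hE, zero_smul, add_zero, map_sub, twR_tmul, twPhi_tmul, A.mul_one', A.one_mul',
      DGAlgebra.mulMap, C.counit_parity, TensorProduct.lid_tmul, LinearMap.id_apply, map_smul,
      TensorProduct.sub_tmul, TensorProduct.tmul_smul, TensorProduct.smul_tmul']

def coneChain (ht : t.toFun C.one = 0) (E : Augm A) (hE : ∀ c, E.e (t.toFun c) = 0) :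
    TwistingChain C.toDGCoalgebra (coneAlg C A t ht E) where
  toFun := coneTau C A t
  mem := by
    intro n x hx
    refine ⟨t.mem n x hx, ?_⟩
    rw [show n - 1 + 1 = n by ring]
    change (x - C.counit x • C.one) ⊗ₜ A.one ∈ tensorGrading C.grading A.grading n
    refine tmul_mem_tensorGrading _ _ (i := n) ?_ A.one_mem (by ring)
    refine Submodule.sub_mem _ hx ?_
    by_cases hn : n = 0
    · subst hn
      exact Submodule.smul_mem _ _ C.one_mem
    · rw [C.counit_zero n hn x hx, zero_smul]
      exact Submodule.zero_mem _
  twist := by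
    apply LinearMap.ext
    intro c
    change coneD C A t E (coneTau C A t c) + coneTau C A t (C.d c)
      + TensorProduct.lift (coneMul C A E) (TensorProduct.map
        ((coneTau C A t).comp (parityOf C.grading)) (coneTau C A t) (C.comul c)) = 0
    have h := twist_apply C.toDGCoalgebra A t c
    rw [coneTau_twist_aux C A t E hE, counit_left, coneTau_apply, coneTau_apply, coneD_apply,
      coneIota_apply, hE, counit_d, zero_smul, zero_smul, TensorProduct.sub_tmul,
      TensorProduct.smul_tmul, TensorProduct.tmul_smul, map_sub, map_smul, twD_one C A t ht,
      A.d_one, twD_tmul, A.d_one]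
    ext1
    · exact h
    · simp only [TensorProduct.tmul_zero, smul_zero, sub_zero, add_zero, Prod.snd_add,
        Prod.snd_zero, TensorProduct.zero_tmul]
      abel

end Cone

/-- The Fox derivative on the cobar construction. -/
theorem exists_fox (C : CoaugDGCoalgebra) (Ω : CobarData C) (E : Augm Ω.alg)
    (hE : ∀ c, E.e (Ω.t.toFun c) = 0) :
    ∃ φ : Ω.alg.carrier →ₗ[ℚ] C.carrier ⊗[ℚ] Ω.alg.carrier,
      (∀ a b, φ (Ω.alg.mul a b) = twR C.toDGCoalgebra Ω.alg b (φ a) + E.e a • φ b) ∧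
      (∀ c, φ (Ω.t.toFun c) = (c - C.counit c • C.one) ⊗ₜ Ω.alg.one) ∧
      (∀ a, φ (Ω.alg.d a) = C.one ⊗ₜ a - E.e a • (C.one ⊗ₜ[ℚ] Ω.alg.one)
        - twD C.toDGCoalgebra Ω.alg Ω.t (φ a)) ∧
      (∀ a, twP C.toDGCoalgebra Ω.alg (φ a) = - φ (parityOf Ω.alg.grading a)) := by
  obtain ⟨F, hF, -⟩ := Ω.univ (coneAlg C Ω.alg Ω.t Ω.t_one E)
    (coneChain C Ω.alg Ω.t Ω.t_one E hE) (by
      change coneTau C Ω.alg Ω.t C.one = 0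
      rw [coneTau_apply, Ω.t_one, C.counit_one]
      simp)
  let f : Ω.alg.carrier →ₗ[ℚ] Ω.alg.carrier × (C.carrier ⊗[ℚ] Ω.alg.carrier) := F.toLinearMap
  have hf_mul : ∀ a b, f (Ω.alg.mul a b) = coneMul C Ω.alg E (f a) (f b) := F.map_mul
  have hf_d : ∀ a, f (Ω.alg.d a) = coneD C Ω.alg Ω.t E (f a) :=
    fun a => LinearMap.congr_fun F.chain a
  have hf_t : ∀ c, f (Ω.t.toFun c) = coneTau C Ω.alg Ω.t c :=
    fun c => LinearMap.congr_fun hF c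
  have hf_one : f Ω.alg.one = (Ω.alg.one, 0) := F.map_one
  have hf_mem : ∀ n, ∀ x ∈ Ω.alg.grading n,
    f x ∈ prodGrading Ω.alg.grading (tensorGrading C.grading Ω.alg.grading) n := F.mem
  let G : DGAlgebraHom Ω.alg Ω.alg :=
    { toLinearMap := (LinearMap.fst ℚ _ _).comp f
      mem := fun n x hx => (hf_mem n x hx).1
      chain := by
        apply LinearMap.ext
        intro a
        simp only [LinearMap.comp_apply, hf_d]
        rfl
      map_one := by simp [hf_one]
      map_mul := by
        intro x y
        simp only [LinearMap.comp_apply, hf_mul]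
        rfl }
  let I : DGAlgebraHom Ω.alg Ω.alg :=
    { toLinearMap := LinearMap.id
      mem := fun n x hx => hx
      chain := rfl
      map_one := rfl
      map_mul := fun x y => rfl }
  have hGI : G = I := by
    obtain ⟨H, -, hH⟩ := Ω.univ Ω.alg Ω.t Ω.t_one
    rw [hH G, hH I]
    · rfl
    · apply LinearMap.ext
      intro c
      change (f (Ω.t.toFun c)).1 = _
      rw [hf_t]
      rfl
  have hfst : ∀ a, (f a).1 = a := by
    intro a
    have : G.toLinearMap a = I.toLinearMap a := by rw [hGI]
    exact this
  refine ⟨(LinearMap.snd ℚ _ _).comp f, ?_, ?_, ?_, ?_⟩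
  · intro a b
    simp only [LinearMap.comp_apply, hf_mul, LinearMap.snd_apply]
    change twR C.toDGCoalgebra Ω.alg (f b).1 (f a).2 + E.e (f a).1 • (f b).2 = _
    rw [hfst, hfst]
  · intro c
    simp only [LinearMap.comp_apply, hf_t]
    rfl
  · intro a
    simp only [LinearMap.comp_apply, hf_d, LinearMap.snd_apply]
    change coneIota C Ω.alg E (f a).1 - twD C.toDGCoalgebra Ω.alg Ω.t (f a).2 = _
    rw [hfst, coneIota_apply]
  · intro a
    have : (twP C.toDGCoalgebra Ω.alg).comp ((LinearMap.snd ℚ _ _).comp f)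
        = - ((LinearMap.snd ℚ _ _).comp f).comp (parityOf Ω.alg.grading) := by
      apply lin_ext_homog Ω.alg.grading
      intro n x hx
      have h1 : twP C.toDGCoalgebra Ω.alg (f x).2 = ((-1 : ℚ) ^ (n + 1)) • (f x).2 :=
        parity_tensor _ _ (hf_mem n x hx).2
      simp only [LinearMap.comp_apply, LinearMap.neg_apply, LinearMap.snd_apply, h1,
        parityOf_apply_mem _ hx, map_smul, negOne_zpow_add_one, neg_smul]
    exact LinearMap.congr_fun this a

/-! ## The contraction -/

section Contraction

variable (C : CoaugDGCoalgebra) (A : DGAlgebra) (t : TwistingChain C.toDGCoalgebra A)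
variable (N : DGComodule C.toDGCoalgebra)

/-- The differential on `C ⊗^t (A ⊗_t N)`. -/
def totD : C.carrier ⊗[ℚ] (A.carrier ⊗[ℚ] N.carrier)
    →ₗ[ℚ] C.carrier ⊗[ℚ] (A.carrier ⊗[ℚ] N.carrier) :=
  coextDiff C.toDGCoalgebra A t (A.carrier ⊗[ℚ] N.carrier)
        (extDiff C.toDGCoalgebra A t N.carrier N.d N.coact)
        (extAction A N.carrier)

/-- `y ⊗ n ↦ P(a) t(y) ⊗ n`. -/
def extT (a : A.carrier) : C.carrier ⊗[ℚ] N.carrier →ₗ[ℚ] A.carrier ⊗[ℚ] N.carrier :=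
  TensorProduct.map ((A.mul (parityOf A.grading a)).comp t.toFun) LinearMap.id

theorem extT_tmul (a : A.carrier) (y : C.carrier) (n : N.carrier) :
    extT C A t N a (y ⊗ₜ n) = A.mul (parityOf A.grading a) (t.toFun y) ⊗ₜ n := by
  simp [extT]

theorem extDiff_tmul (a : A.carrier) (n : N.carrier) :
    extDiff C.toDGCoalgebra A t N.carrier N.d N.coact (a ⊗ₜ n)
      = A.d a ⊗ₜ n + parityOf A.grading a ⊗ₜ N.d n - extT C A t N a (N.coact n) := by
  simp only [extDiff, LinearMap.add_apply, LinearMap.sub_apply,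
    TensorProduct.map_tmul, LinearMap.id_apply, LinearMap.comp_apply, LinearEquiv.coe_coe]
  congr 1
  generalize N.coact n = z
  induction z with
  | zero => simp
  | tmul x y => simp [extT_tmul, DGAlgebra.mulMap]
  | add u v hu hv => simp only [TensorProduct.tmul_add, map_add, hu, hv]

/-- `x ⊗ y ↦ Px ⊗ (t(y) a ⊗ n)`. -/
def totPhi (a : A.carrier) (n : N.carrier) :
    C.carrier ⊗[ℚ] C.carrier →ₗ[ℚ] C.carrier ⊗[ℚ] (A.carrier ⊗[ℚ] N.carrier) :=
  TensorProduct.map (parityOf C.grading)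
    (((TensorProduct.mk ℚ A.carrier N.carrier).flip n).comp ((A.mul.flip a).comp t.toFun))

theorem totPhi_tmul (a : A.carrier) (n : N.carrier) (x y : C.carrier) :
    totPhi C A t N a n (x ⊗ₜ y) = parityOf C.grading x ⊗ₜ (A.mul (t.toFun y) a ⊗ₜ n) := by
  simp [totPhi]

theorem totD_tmul (c : C.carrier) (a : A.carrier) (n : N.carrier) :
    totD C A t N (c ⊗ₜ (a ⊗ₜ n)) = C.d c ⊗ₜ (a ⊗ₜ n)
      + parityOf C.grading c ⊗ₜ (A.d a ⊗ₜ n + parityOf A.grading a ⊗ₜ N.d n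
        - extT C A t N a (N.coact n))
      + totPhi C A t N a n (C.comul c) := by
  rw [← extDiff_tmul]
  simp only [totD, coextDiff, coextDiffFrom, coextCoact, LinearMap.add_apply,
    TensorProduct.map_tmul, LinearMap.id_apply, LinearMap.comp_apply, LinearEquiv.coe_coe]
  congr 1
  generalize C.comul c = z
  induction z with
  | zero => simp
  | tmul x y => simp [totPhi_tmul, DGAlgebra.mulMap, extAction]
  | add u v hu hv => simp only [TensorProduct.add_tmul, map_add, hu, hv]

/-- The associator `(C ⊗ A) ⊗ N → C ⊗ (A ⊗ N)`. -/
abbrev asc : (C.carrier ⊗[ℚ] A.carrier) ⊗[ℚ] N.carrier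
    ≃ₗ[ℚ] C.carrier ⊗[ℚ] (A.carrier ⊗[ℚ] N.carrier) :=
  TensorProduct.assoc ℚ C.carrier A.carrier N.carrier

/-- `y ⊗ n ↦ m t(y) ⊗ n`. -/
def totT : C.carrier ⊗[ℚ] A.carrier →ₗ[ℚ] C.carrier ⊗[ℚ] N.carrier →ₗ[ℚ]
    C.carrier ⊗[ℚ] (A.carrier ⊗[ℚ] N.carrier) :=
  TensorProduct.lift
    { toFun := fun c =>
        { toFun := fun a => TensorProduct.lift
            { toFun := fun y => (TensorProduct.mk ℚ C.carrier _ c).comp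
                (TensorProduct.mk ℚ A.carrier N.carrier (A.mul a (t.toFun y)))
              map_add' := by intros; ext; simp [TensorProduct.add_tmul, TensorProduct.tmul_add]
              map_smul' := by intros; ext; simp [← TensorProduct.smul_tmul'] }
          map_add' := by
            intros; apply TensorProduct.ext'; intros
            simp [TensorProduct.add_tmul, TensorProduct.tmul_add]
          map_smul' := by
            intros; apply TensorProduct.ext'; intros; simp [← TensorProduct.smul_tmul'] }
      map_add' := by
        intros; ext1; apply TensorProduct.ext'; intros
        simp [TensorProduct.add_tmul]
      map_smul' := by
        intros; ext1; apply TensorProduct.ext'; intros; simp [TensorProduct.smul_tmul'] }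

theorem totT_tmul (m : C.carrier ⊗[ℚ] A.carrier) (y : C.carrier) (n : N.carrier) :
    totT C A t N m (y ⊗ₜ n) = asc C A N (twR C.toDGCoalgebra A (t.toFun y) m ⊗ₜ n) := by
  induction m with
  | zero => simp
  | add u v hu hv => simp only [map_add, LinearMap.add_apply, hu, hv, TensorProduct.add_tmul]
  | tmul c a => simp [totT, twR_tmul]

theorem totD_asc (m : C.carrier ⊗[ℚ] A.carrier) (n : N.carrier) :
    totD C A t N (asc C A N (m ⊗ₜ n)) = asc C A N (twD C.toDGCoalgebra A t m ⊗ₜ n)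
      + asc C A N (twP C.toDGCoalgebra A m ⊗ₜ N.d n)
      - totT C A t N (twP C.toDGCoalgebra A m) (N.coact n) := by
  induction m with
  | zero => simp
  | add u v hu hv =>
    simp only [map_add, LinearMap.add_apply, hu, hv, TensorProduct.add_tmul]
    abel
  | tmul c a =>
    have h1 : totPhi C A t N a n (C.comul c)
        = asc C A N (twPhi C.toDGCoalgebra A t a (C.comul c) ⊗ₜ n) := by
      generalize C.comul c = z
      induction z with
      | zero => simp
      | add u v hu hv => simp only [map_add, hu, hv, TensorProduct.add_tmul]
      | tmul x y => simp [totPhi_tmul, twPhi_tmul]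
    have h2 : totT C A t N (twP C.toDGCoalgebra A (c ⊗ₜ a)) (N.coact n)
        = parityOf C.grading c ⊗ₜ extT C A t N a (N.coact n) := by
      generalize N.coact n = z
      induction z with
      | zero => simp
      | add u v hu hv => simp only [map_add, hu, hv, TensorProduct.tmul_add]
      | tmul x y => simp [totT_tmul, extT_tmul, twP, twR_tmul]
    rw [h2, TensorProduct.assoc_tmul, totD_tmul, h1, twD_tmul]
    simp only [TensorProduct.add_tmul, map_add, TensorProduct.assoc_tmul, twP,
      TensorProduct.map_tmul, TensorProduct.tmul_add, TensorProduct.tmul_sub]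
    abel

/-- The retraction `c ⊗ a ⊗ n ↦ ε(c) e(a) n`. -/
def retr (E : Augm A) : C.carrier ⊗[ℚ] (A.carrier ⊗[ℚ] N.carrier) →ₗ[ℚ] N.carrier :=
  (TensorProduct.lid ℚ N.carrier).toLinearMap.comp
    (TensorProduct.map C.counit ((TensorProduct.lid ℚ N.carrier).toLinearMap.comp
      (TensorProduct.map E.e LinearMap.id)))

theorem retr_tmul (E : Augm A) (c : C.carrier) (a : A.carrier) (n : N.carrier) :
    retr C A N E (c ⊗ₜ (a ⊗ₜ n)) = C.counit c • E.e a • n := by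
  simp only [retr, LinearMap.comp_apply, TensorProduct.map_tmul, LinearEquiv.coe_coe,
    TensorProduct.lid_tmul, LinearMap.id_apply]

theorem retr_totD (E : Augm A) (hE : ∀ c, E.e (t.toFun c) = 0)
    (w : C.carrier ⊗[ℚ] (A.carrier ⊗[ℚ] N.carrier)) :
    retr C A N E (totD C A t N w) = N.d (retr C A N E w) := by
  have : (retr C A N E).comp (totD C A t N) = N.d.comp (retr C A N E) := by
    apply TensorProduct.ext
    apply LinearMap.ext
    intro c
    apply TensorProduct.ext'
    intro a n
    change retr C A N E (totD C A t N (c ⊗ₜ (a ⊗ₜ n))) = N.d (retr C A N E (c ⊗ₜ (a ⊗ₜ n)))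
    have h1 : retr C A N E (totPhi C A t N a n (C.comul c)) = 0 := by
      generalize C.comul c = z
      induction z with
      | zero => simp
      | add u v hu hv => simp only [map_add, hu, hv, add_zero]
      | tmul x y => simp [totPhi_tmul, retr_tmul, E.e_mul, hE]
    have h2 : retr C A N E (parityOf C.grading c ⊗ₜ extT C A t N a (N.coact n)) = 0 := by
      generalize N.coact n = z
      induction z with
      | zero => simp
      | add u v hu hv => simp only [map_add, hu, hv, TensorProduct.tmul_add, add_zero]
      | tmul x y => simp [extT_tmul, retr_tmul, E.e_mul, hE]
    simp only [totD_tmul, TensorProduct.tmul_add, TensorProduct.tmul_sub, map_add, map_sub, h1, h2,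
      retr_tmul, counit_d, E.e_d, C.counit_parity, E.e_parity, map_smul]
    simp
  exact LinearMap.congr_fun this w

/-- The homotopy `c ⊗ a ⊗ n ↦ ε(c) φ(a) ⊗ n`. -/
def htpy (φ : A.carrier →ₗ[ℚ] C.carrier ⊗[ℚ] A.carrier) :
    C.carrier ⊗[ℚ] (A.carrier ⊗[ℚ] N.carrier)
      →ₗ[ℚ] C.carrier ⊗[ℚ] (A.carrier ⊗[ℚ] N.carrier) :=
  (TensorProduct.lid ℚ _).toLinearMap.comp
    (TensorProduct.map C.counit ((asc C A N).toLinearMap.comp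
      (TensorProduct.map φ LinearMap.id)))

theorem htpy_tmul (φ : A.carrier →ₗ[ℚ] C.carrier ⊗[ℚ] A.carrier)
    (c : C.carrier) (a : A.carrier) (n : N.carrier) :
    htpy C A N φ (c ⊗ₜ (a ⊗ₜ n)) = C.counit c • asc C A N (φ a ⊗ₜ n) := by
  simp [htpy]

/-- The unit for a general twisting chain. -/
def genUnit : N.carrier →ₗ[ℚ] C.carrier ⊗[ℚ] (A.carrier ⊗[ℚ] N.carrier) :=
  (TensorProduct.map LinearMap.id
      ((TensorProduct.mk ℚ A.carrier N.carrier) A.one)).comp N.coact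

theorem coact_counit (n : N.carrier) :
    TensorProduct.lid ℚ N.carrier (TensorProduct.map C.counit LinearMap.id (N.coact n)) = n :=
  LinearMap.congr_fun N.counit_coact n

theorem retr_genUnit (E : Augm A) (n : N.carrier) :
    retr C A N E (genUnit C A N n) = n := by
  conv_rhs => rw [← coact_counit C N n]
  simp only [genUnit, LinearMap.comp_apply]
  generalize N.coact n = z
  induction z with
  | zero => simp
  | add u v hu hv => simp only [map_add, hu, hv]
  | tmul x y => simp [retr_tmul, E.e_one]

theorem htpy_formula (E : Augm A) (hE : ∀ c, E.e (t.toFun c) = 0)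
    (φ : A.carrier →ₗ[ℚ] C.carrier ⊗[ℚ] A.carrier)
    (h1 : ∀ a b, φ (A.mul a b) = twR C.toDGCoalgebra A b (φ a) + E.e a • φ b)
    (h2 : ∀ c, φ (t.toFun c) = (c - C.counit c • C.one) ⊗ₜ A.one)
    (h3 : ∀ a, φ (A.d a) = C.one ⊗ₜ a - E.e a • (C.one ⊗ₜ[ℚ] A.one)
        - twD C.toDGCoalgebra A t (φ a))
    (h4 : ∀ a, twP C.toDGCoalgebra A (φ a) = - φ (parityOf A.grading a))
    (w : C.carrier ⊗[ℚ] (A.carrier ⊗[ℚ] N.carrier)) :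
    htpy C A N φ (totD C A t N w) + totD C A t N (htpy C A N φ w)
      = w - genUnit C A N (retr C A N E w) := by
  have : (htpy C A N φ).comp (totD C A t N) + (totD C A t N).comp (htpy C A N φ)
      = LinearMap.id - (genUnit C A N).comp (retr C A N E) := by
    apply TensorProduct.ext
    apply LinearMap.ext
    intro c
    apply TensorProduct.ext'
    intro a n
    change htpy C A N φ (totD C A t N (c ⊗ₜ (a ⊗ₜ n)))
        + totD C A t N (htpy C A N φ (c ⊗ₜ (a ⊗ₜ n)))
      = c ⊗ₜ (a ⊗ₜ n) - genUnit C A N (retr C A N E (c ⊗ₜ (a ⊗ₜ n)))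
    have k1 : htpy C A N φ (totPhi C A t N a n (C.comul c))
        = c ⊗ₜ (a ⊗ₜ n) - C.counit c • (C.one ⊗ₜ (a ⊗ₜ n)) := by
      have e1 : ∀ z, htpy C A N φ (totPhi C A t N a n z) = asc C A N (φ (A.mul (t.toFun
          (TensorProduct.lid ℚ C.carrier (TensorProduct.map C.counit LinearMap.id z))) a)
            ⊗ₜ n) := by
        intro z
        induction z with
        | zero => simp
        | add u v hu hv => simp only [map_add, hu, hv, LinearMap.add_apply, TensorProduct.add_tmul]
        | tmul x y =>
          simp [totPhi_tmul, htpy_tmul, C.counit_parity, ← TensorProduct.smul_tmul']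
      rw [e1, counit_left, h1, hE, h2, twR_tmul, A.one_mul', zero_smul, add_zero,
        TensorProduct.sub_tmul, TensorProduct.sub_tmul, map_sub]
      simp [TensorProduct.smul_tmul']
    have k2 : htpy C A N φ (parityOf C.grading c ⊗ₜ extT C A t N a (N.coact n))
        = C.counit c • (totT C A t N (φ (parityOf A.grading a)) (N.coact n)
          + E.e a • (genUnit C A N n - C.one ⊗ₜ (A.one ⊗ₜ n))) := by
      have e2 : ∀ z, htpy C A N φ (parityOf C.grading c ⊗ₜ extT C A t N a z)
        = C.counit c • (totT C A t N (φ (parityOf A.grading a)) z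
          + E.e a • (TensorProduct.map LinearMap.id
              ((TensorProduct.mk ℚ A.carrier N.carrier) A.one) z - C.one ⊗ₜ (A.one ⊗ₜ
              (TensorProduct.lid ℚ N.carrier (TensorProduct.map C.counit LinearMap.id z))))) := by
        intro z
        induction z with
        | zero => simp
        | add u v hu hv =>
          simp only [map_add, hu, hv, TensorProduct.tmul_add, smul_add, smul_sub]
          abel
        | tmul x y =>
          rw [extT_tmul, htpy_tmul, C.counit_parity, h1, h2, totT_tmul, E.e_parity,
            TensorProduct.add_tmul, map_add]
          simp [TensorProduct.sub_tmul, ← TensorProduct.smul_tmul']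
      rw [e2, coact_counit]
      rfl
    rw [totD_tmul, htpy_tmul, retr_tmul, map_smul, totD_asc, h4]
    simp only [map_add, map_sub, TensorProduct.tmul_add, TensorProduct.tmul_sub, k1, k2, htpy_tmul,
      counit_d, zero_smul, C.counit_parity, h3, TensorProduct.sub_tmul, TensorProduct.neg_tmul,
      map_neg, LinearMap.neg_apply, smul_add, smul_sub, smul_neg, map_smul,
      ← TensorProduct.smul_tmul', TensorProduct.assoc_tmul]
    abel
  exact LinearMap.congr_fun this w

end Contraction

end CobarHelpers

/-- For a 2-reduced cocommutative dg coalgebra `C` with universal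
twisting chain `t : C ⇝ ΩC` and any left dg `C`-comodule `N`, the unit
`N → t_* t^! N = C ⊗^t (ΩC ⊗_t N)`, `n ↦ n₍₀₎ ⊗ 1 ⊗ n₍₁₎` is a quasi-isomorphism
of `C`-comodules, natural in `N`. -/
theorem cobar_unit_is_quasiIso (C : CoaugDGCoalgebra) (hred : C.TwoReduced)
    (hcc : C.toDGCoalgebra.Cocomm) (Ω : CobarData C) (N : DGComodule C.toDGCoalgebra) :
    -- the unit is colinear:
    (coextCoact C.toDGCoalgebra (Ω.alg.carrier ⊗[ℚ] N.carrier)).comp (cobarUnit C Ω N)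
      = (TensorProduct.map LinearMap.id (cobarUnit C Ω N)).comp N.coact ∧
    -- it is a quasi-isomorphism:
    IsQuasiIso N.d
      (coextDiff C.toDGCoalgebra Ω.alg Ω.t (Ω.alg.carrier ⊗[ℚ] N.carrier)
        (extDiff C.toDGCoalgebra Ω.alg Ω.t N.carrier N.d N.coact)
        (extAction Ω.alg N.carrier))
      (cobarUnit C Ω N) ∧
    -- and it is natural in `N`:
    (∀ (N' : DGComodule C.toDGCoalgebra) (f : N.carrier →ₗ[ℚ] N'.carrier),
      IsComoduleHom C.toDGCoalgebra N N' f →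
      (TensorProduct.map LinearMap.id (TensorProduct.map LinearMap.id f)).comp
          (cobarUnit C Ω N)
        = (cobarUnit C Ω N').comp f) := by
  refine ⟨?_, ?_, ?_⟩
  · apply LinearMap.ext
    intro n
    have hco : (TensorProduct.assoc ℚ C.carrier C.carrier N.carrier)
          (TensorProduct.map C.comul LinearMap.id (N.coact n))
        = TensorProduct.map LinearMap.id N.coact (N.coact n) := LinearMap.congr_fun N.coassoc n
    let j : N.carrier →ₗ[ℚ] Ω.alg.carrier ⊗[ℚ] N.carrier :=
      (TensorProduct.mk ℚ Ω.alg.carrier N.carrier) Ω.alg.one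
    have e1 : ∀ z : C.carrier ⊗[ℚ] N.carrier,
        coextCoact C.toDGCoalgebra (Ω.alg.carrier ⊗[ℚ] N.carrier)
          (TensorProduct.map LinearMap.id j z)
        = TensorProduct.map LinearMap.id (TensorProduct.map LinearMap.id j)
          ((TensorProduct.assoc ℚ C.carrier C.carrier N.carrier)
          (TensorProduct.map C.comul LinearMap.id z)) := by
      intro z
      induction z with
      | zero => simp
      | add u v hu hv => simp only [map_add, hu, hv]
      | tmul x y =>
        simp only [coextCoact, TensorProduct.map_tmul, LinearMap.comp_apply, LinearMap.id_apply,
          LinearEquiv.coe_coe]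
        generalize C.comul x = u
        induction u with
        | zero => simp
        | add u v hu hv => simp only [map_add, hu, hv, TensorProduct.add_tmul]
        | tmul p q => simp
    change coextCoact C.toDGCoalgebra (Ω.alg.carrier ⊗[ℚ] N.carrier)
          (TensorProduct.map LinearMap.id j (N.coact n))
      = TensorProduct.map LinearMap.id ((TensorProduct.map LinearMap.id j).comp N.coact)
        (N.coact n)
    rw [e1, hco]
    generalize N.coact n = z
    induction z with
    | zero => simp
    | add u v hu hv => simp only [map_add, hu, hv]
    | tmul x y => simp
  · obtain ⟨E, hE⟩ := exists_augm C Ω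
    obtain ⟨φ, h1, h2, h3, h4⟩ := exists_fox C Ω E hE
    have key := htpy_formula C Ω.alg Ω.t N E hE φ h1 h2 h3 h4
    change IsQuasiIso N.d (totD C Ω.alg Ω.t N) (genUnit C Ω.alg N)
    constructor
    · rintro x - ⟨y, hy⟩
      refine ⟨retr C Ω.alg N E y, ?_⟩
      rw [← retr_totD C Ω.alg Ω.t N E hE, ← hy, retr_genUnit]
    · intro w hw
      refine ⟨retr C Ω.alg N E w, ?_, htpy C Ω.alg N φ w, ?_⟩
      · rw [← retr_totD C Ω.alg Ω.t N E hE, hw, map_zero]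
      · rw [← key w, hw, map_zero, zero_add]
  · rintro N' f ⟨-, -, hf⟩
    apply LinearMap.ext
    intro n
    have h : N'.coact (f n) = TensorProduct.map LinearMap.id f (N.coact n) :=
      (LinearMap.congr_fun hf n).symm
    simp only [cobarUnit, LinearMap.comp_apply, h]
    generalize N.coact n = z
    induction z with
    | zero => simp
    | add u v hu hv => simp only [map_add, hu, hv]
    | tmul x y => simp

end
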